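/- Let G be a finite simple graph with n vertices numbered v₁, …, v_n so that d(v₁) ≥ d(v₂) ≥ ⋯ ≥ d(v_n), let k and w be nonnegative integers, and suppose there is an index t with 1 ≤ t < n such that δ_t := d(v_t) − d(v_{t+1}) > k. Let G' be any spanning subgraph of G obtained by deleting, for each i = 1, …, t, exactly δ_t − k edges joining v_i to vertices in {v_{t+1}, …, v_n}, and deleting no other edges. Then (G, w, k) is a yes-instance of minimum sum vertex cover if and only if (G', w − (t² + t)(δ_t − k)/2, k) is a yes-instance. -/

import Mathlib

/-!
Let `T` be the set of the first `t` vertices. In both `G` and `G'` every vertex of `T` has degree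
greater than `k` and exceeds the degree of every vertex outside `T` by at least `k`.

* A vertex of degree greater than `k` must occupy one of the first `k` positions of any solution of
  maximum cost at most `k`, since otherwise all its neighbours do (`pos_lt_of_degree`). Each deleted
  edge meets `T`, so `G` and `G'` have the same solutions of maximum cost at most `k`.
* If a vertex `y ∈ T` stands immediately after a vertex `x ∉ T`, exchanging them does not increase
  the total cost: at most `d(x)` edges get more expensive by one, and all edges from `y` to later
  vertices, of which there are at least `d(y) - (k - 1)`, get cheaper by one (`totalCost_swap_le`).
  Hence `T` may be assumed to occupy the first `t` positions (`exists_front`).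
* For such a solution the deleted edges cost exactly `(1 + ⋯ + t)(δ - k)` (`sum_deleted`).

The truncated subtraction is harmless: `G'` has an edge, so `(G', 0, k)` is a no-instance.
-/

/-- The 1-indexed cost of an edge under an ordering `σ` of the vertices. -/
def edgeCost {V : Type*} [Fintype V] (σ : V ≃ Fin (Fintype.card V)) : Sym2 V → ℕ :=
  Sym2.lift ⟨fun u v => min ((σ u : ℕ) + 1) ((σ v : ℕ) + 1), fun u v => by
    simp [min_comm]⟩

/-- The total cost of a solution `σ`: the sum of the costs of all edges. -/
def totalCost {V : Type*} [Fintype V] [DecidableEq V] (G : SimpleGraph V)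
    [DecidableRel G.Adj] (σ : V ≃ Fin (Fintype.card V)) : ℕ :=
  ∑ e ∈ G.edgeFinset, edgeCost σ e

/-- The maximum cost of the solution `σ` is at most `k`. -/
def MaxCostLe {V : Type*} [Fintype V] (G : SimpleGraph V)
    (σ : V ≃ Fin (Fintype.card V)) (k : ℕ) : Prop :=
  ∀ ⦃u v : V⦄, G.Adj u v → min ((σ u : ℕ) + 1) ((σ v : ℕ) + 1) ≤ k

/-- A solution `σ` is feasible for `(G, w, k)` if its maximum cost is at most `k`
and its total cost is at most `w`. -/
def Feasible {V : Type*} [Fintype V] [DecidableEq V] (G : SimpleGraph V)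
    [DecidableRel G.Adj] (σ : V ≃ Fin (Fintype.card V)) (w k : ℕ) : Prop :=
  MaxCostLe G σ k ∧ totalCost G σ ≤ w

/-- `(G, w, k)` is a yes-instance if it admits a feasible solution. -/
def YesInstance {V : Type*} [Fintype V] [DecidableEq V] (G : SimpleGraph V)
    [DecidableRel G.Adj] (w k : ℕ) : Prop :=
  ∃ σ : V ≃ Fin (Fintype.card V), Feasible G σ w k

/-- A solution `σ` is optimal for parameter `k` if its maximum cost is at most `k`
and its total cost is minimum among all solutions with maximum cost at most `k`. -/
def Optimal {V : Type*} [Fintype V] [DecidableEq V] (G : SimpleGraph V)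
    [DecidableRel G.Adj] (σ : V ≃ Fin (Fintype.card V)) (k : ℕ) : Prop :=
  MaxCostLe G σ k ∧
    ∀ σ' : V ≃ Fin (Fintype.card V), MaxCostLe G σ' k → totalCost G σ ≤ totalCost G σ'

/-- `r G σ i` is the number of edges of cost `i` (where the position `i` is 0-indexed as
an element of `Fin n`): the number of neighbors of the vertex at position `i` that occur
at later positions. -/
def r {V : Type*} [Fintype V] (G : SimpleGraph V) [DecidableRel G.Adj]
    (σ : V ≃ Fin (Fintype.card V)) (i : Fin (Fintype.card V)) : ℕ :=
  ((G.neighborFinset (σ.symm i)).filter fun x => i < σ x).card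

theorem edgeCost_mk {V : Type*} [Fintype V] (σ : V ≃ Fin (Fintype.card V)) (a b : V) :
    edgeCost σ s(a, b) = min ((σ a : ℕ) + 1) ((σ b : ℕ) + 1) := rfl

theorem card_pos_lt {V : Type*} [Fintype V] [DecidableEq V] (σ : V ≃ Fin (Fintype.card V))
    (m : ℕ) : (Finset.univ.filter fun z => (σ z : ℕ) < m).card ≤ m := by
  have h := Finset.card_le_card_of_injOn (s := Finset.univ.filter fun z => (σ z : ℕ) < m)
    (t := Finset.range m) (fun z => (σ z : ℕ)) (by intro z hz; simpa using hz)
    (by intro a _ b _ hab; exact σ.injective (Fin.ext hab))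
  simpa using h

theorem pos_lt_of_degree {V : Type*} [Fintype V] [DecidableEq V] (H : SimpleGraph V)
    [DecidableRel H.Adj] (σ : V ≃ Fin (Fintype.card V)) (k : ℕ) (hσ : MaxCostLe H σ k)
    (y : V) (hy : k < H.degree y) : (σ y : ℕ) < k := by
  by_contra hk
  have hsub : H.neighborFinset y ⊆ Finset.univ.filter fun z => (σ z : ℕ) < k := by
    intro z hz
    have h := hσ ((H.mem_neighborFinset y z).1 hz)
    simp only [Finset.mem_filter, Finset.mem_univ, true_and]
    omega
  have h1 := Finset.card_le_card hsub
  have h2 := card_pos_lt σ k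
  rw [H.card_neighborFinset_eq_degree] at h1
  omega

/-- Moving `y` one place to the front, past `x`, does not increase the total cost when the degree
of `y` is large enough: the term `e ∈ A` below marks the edges from `y` to `x` or to later
vertices. -/
theorem totalCost_swap_le {V : Type*} [Fintype V] [DecidableEq V] (H : SimpleGraph V)
    [DecidableRel H.Adj] (σ σ' : V ≃ Fin (Fintype.card V)) (x y : V)
    (hxy : (σ y : ℕ) = σ x + 1) (hx : σ' x = σ y) (hy : σ' y = σ x)
    (ho : ∀ z, z ≠ x → z ≠ y → σ' z = σ z)
    (hdeg : H.degree x + σ y ≤ H.degree y) : totalCost H σ' ≤ totalCost H σ := by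
  set A := H.edgeFinset.filter fun e => y ∈ e ∧ ∀ z ∈ e, z = x ∨ (σ y : ℕ) ≤ σ z with hA
  set B := H.edgeFinset.filter fun e => x ∈ e with hB
  have hBc : B.card = H.degree x := by
    rw [← H.card_incidenceFinset_eq_degree, H.incidenceFinset_eq_filter]
  have hAc : H.degree y ≤ A.card + σ y := by
    rw [← H.card_incidenceFinset_eq_degree, H.incidenceFinset_eq_filter]
    have hsub : (H.edgeFinset.filter fun e => y ∈ e) ⊆
        A ∪ (Finset.univ.filter fun z => (σ z : ℕ) < σ y).image fun z => s(y, z) := by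
      intro e he
      obtain ⟨he, hye⟩ := Finset.mem_filter.1 he
      obtain ⟨z, rfl⟩ := hye
      by_cases hz : (σ z : ℕ) < σ y
      · refine Finset.mem_union_right _ (Finset.mem_image_of_mem _ ?_)
        simpa using hz
      · refine Finset.mem_union_left _ (Finset.mem_filter.2 ⟨he, by simp, ?_⟩)
        intro u hu
        rcases Sym2.mem_iff.1 hu with rfl | rfl
        · exact Or.inr le_rfl
        · exact Or.inr (by omega)
    refine (Finset.card_le_card hsub).trans ((Finset.card_union_le _ _).trans ?_)
    have := Finset.card_image_le (s := Finset.univ.filter fun z => (σ z : ℕ) < σ y)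
      (f := fun z => s(y, z))
    have := card_pos_lt σ (σ y)
    omega
  have key : totalCost H σ' + A.card ≤ totalCost H σ + B.card := by
    unfold totalCost
    rw [hA, hB, Finset.card_filter, Finset.card_filter, ← Finset.sum_add_distrib,
      ← Finset.sum_add_distrib]
    refine Finset.sum_le_sum fun e he => ?_
    induction e with
    | _ a b =>
    have hab : a ≠ b := (SimpleGraph.mem_edgeFinset.1 he : H.Adj a b).ne
    have hne : x ≠ y := by rintro rfl; omega
    have hval : ∀ z, (z = x ∧ (σ' z : ℕ) = σ x + 1 ∧ (σ z : ℕ) = σ x) ∨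
        (z = y ∧ (σ' z : ℕ) = σ x ∧ (σ z : ℕ) = σ x + 1) ∨
        (z ≠ x ∧ z ≠ y ∧ (σ' z : ℕ) = σ z ∧ (σ z : ℕ) ≠ σ x ∧ (σ z : ℕ) ≠ σ x + 1) := by
      intro z
      by_cases h1 : z = x
      · subst h1; left; simp [hx, hxy]
      by_cases h2 : z = y
      · subst h2; right; left; simp [hy, hxy]
      refine Or.inr (Or.inr ⟨h1, h2, by rw [ho z h1 h2], ?_, ?_⟩)
      · exact fun h => h1 (σ.injective (Fin.ext h))
      · exact fun h => h2 (σ.injective (Fin.ext (h.trans hxy.symm)))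
    simp only [edgeCost_mk, Sym2.mem_iff]
    have ha := hval a
    have hb := hval b
    split_ifs with hc hd hd
    · have h3 := hc.1; grind
    · have h1 := hc.2 a (Or.inl rfl)
      have h2 := hc.2 b (Or.inr rfl)
      have h3 := hc.1
      grind
    · omega
    · grind
  omega

/-- A set `T` of vertices of large degree can be moved to the front of a solution without
increasing the total cost. The induction is on the sum of the positions of the vertices in `T`. -/
theorem exists_front {V : Type*} [Fintype V] [DecidableEq V] (H : SimpleGraph V)
    [DecidableRel H.Adj] (k : ℕ) (T : Finset V) (hT : ∀ y ∈ T, k < H.degree y)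
    (hdeg : ∀ y ∈ T, ∀ x ∉ T, H.degree x + k ≤ H.degree y) :
    ∀ (N : ℕ) (σ : V ≃ Fin (Fintype.card V)), ∑ y ∈ T, (σ y : ℕ) = N → MaxCostLe H σ k →
      ∃ σ' : V ≃ Fin (Fintype.card V), MaxCostLe H σ' k ∧ totalCost H σ' ≤ totalCost H σ ∧
        ∀ y ∈ T, (σ' y : ℕ) < T.card := by
  intro N
  induction N using Nat.strong_induction_on with
  | _ N ih =>
  intro σ hN hσ
  by_cases hex : ∃ y ∈ T, ∃ x ∉ T, (σ y : ℕ) = σ x + 1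
  · obtain ⟨y, hyT, x, hxT, hxy⟩ := hex
    set σ' := (Equiv.swap x y).trans σ with hσ'
    have hx : σ' x = σ y := by simp [hσ']
    have hy : σ' y = σ x := by simp [hσ']
    have ho : ∀ z, z ≠ x → z ≠ y → σ' z = σ z := by
      intro z h1 h2
      simp [hσ', Equiv.swap_apply_of_ne_of_ne h1 h2]
    have hyk := pos_lt_of_degree H σ k hσ y (hT y hyT)
    have hcost := totalCost_swap_le H σ σ' x y hxy hx hy ho
      (by have := hdeg y hyT x hxT; omega)
    have hmax : MaxCostLe H σ' k := by
      have hval : ∀ z, (σ z : ℕ) < k → (σ' z : ℕ) < k := by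
        intro z hz
        by_cases h1 : z = x
        · rw [h1, hx]; exact hyk
        by_cases h2 : z = y
        · rw [h2, hy]; omega
        rwa [ho z h1 h2]
      intro a b hab
      have h := hσ hab
      have ha := hval a
      have hb := hval b
      omega
    have hlt : ∑ z ∈ T, (σ' z : ℕ) < N := by
      rw [← hN]
      refine Finset.sum_lt_sum (fun z hz => ?_) ⟨y, hyT, by rw [hy]; omega⟩
      have h1 : z ≠ x := fun h => hxT (h ▸ hz)
      by_cases h2 : z = y
      · rw [h2, hy]; omega
      · rw [ho z h1 h2]
    obtain ⟨τ, h1, h2, h3⟩ := ih _ hlt σ' rfl hmax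
    exact ⟨τ, h1, h2.trans hcost, h3⟩
  · refine ⟨σ, hσ, le_rfl, ?_⟩
    push Not at hex
    -- The positions of `T` are closed downwards, so they form an initial segment.
    have hdown : ∀ m : ℕ, ∀ y ∈ T, ∀ z : V, (σ y : ℕ) = σ z + m → z ∈ T := by
      intro m
      induction m with
      | zero =>
        intro y hy z hz
        rwa [← σ.injective (Fin.ext hz)]
      | succ m ihm =>
        intro y hy z hz
        have hlt : (σ z : ℕ) + m < Fintype.card V := by
          have := (σ y).isLt; omega
        refine ihm (σ.symm ⟨σ z + m, hlt⟩) ?_ z (by simp)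
        by_contra hn
        exact hex y hy _ hn (by simp; omega)
    intro y hy
    have hsub : Finset.univ.filter (fun i => i ≤ σ y) ⊆ T.image σ := by
      intro i hi
      have hi : i ≤ σ y := by simpa using hi
      refine Finset.mem_image.2 ⟨σ.symm i, ?_, by simp⟩
      refine hdown ((σ y : ℕ) - i) y hy _ ?_
      have : (i : ℕ) ≤ σ y := hi
      simp only [Equiv.apply_symm_apply]
      omega
    have h1 := (Finset.card_le_card hsub).trans Finset.card_image_le
    have h2 : (Finset.univ.filter fun i => i ≤ σ y).card = (σ y : ℕ) + 1 := by
      rw [Finset.filter_ge_eq_Iic, Fin.card_Iic]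
    omega

/-- The cost of a set `D` of edges between `T` and its complement, with `c` edges at each vertex
of `T`, when `T` occupies the first positions: the vertex at position `i` pays `c * i`. -/
theorem sum_deleted {V : Type*} [Fintype V] [DecidableEq V] (T : Finset V) (D : Finset (Sym2 V))
    (c : ℕ) (hD1 : ∀ e ∈ D, ∃ y ∈ T, ∃ x ∉ T, e = s(y, x))
    (hD2 : ∀ y ∈ T, (D.filter fun e => y ∈ e).card = c)
    (σ : V ≃ Fin (Fintype.card V)) (hσ : ∀ y ∈ T, (σ y : ℕ) < T.card) :
    ∑ e ∈ D, edgeCost σ e = (T.card ^ 2 + T.card) * c / 2 := by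
  have himg : T.image (fun y => (σ y : ℕ)) = Finset.range T.card := by
    refine Finset.eq_of_subset_of_card_le ?_ ?_
    · intro i hi
      obtain ⟨y, hy, rfl⟩ := Finset.mem_image.1 hi
      exact Finset.mem_range.2 (hσ y hy)
    · rw [Finset.card_range, Finset.card_image_of_injective]
      exact fun a b hab => σ.injective (Fin.ext hab)
  have hout : ∀ x ∉ T, T.card ≤ (σ x : ℕ) := by
    intro x hx
    by_contra h
    have : (σ x : ℕ) ∈ T.image (fun y => (σ y : ℕ)) := by
      rw [himg]; exact Finset.mem_range.2 (by omega)
    obtain ⟨y, hy, hyx⟩ := Finset.mem_image.1 this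
    exact hx (σ.injective (Fin.ext hyx) ▸ hy)
  have hcover : D = T.biUnion fun y => D.filter fun e => y ∈ e := by
    ext e
    simp only [Finset.mem_biUnion, Finset.mem_filter]
    constructor
    · intro he
      obtain ⟨y, hy, x, hx, rfl⟩ := hD1 e he
      exact ⟨y, hy, he, by simp⟩
    · rintro ⟨_, _, he, _⟩
      exact he
  have hdisj : (T : Set V).PairwiseDisjoint fun y => D.filter fun e => y ∈ e := by
    intro a ha b hb hab
    refine Finset.disjoint_left.2 fun e hea heb => hab ?_
    obtain ⟨he, hae⟩ := Finset.mem_filter.1 hea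
    have hbe := (Finset.mem_filter.1 heb).2
    obtain ⟨y, hy, x, hx, rfl⟩ := hD1 e he
    have hax : a ≠ x := fun h => hx (h ▸ ha)
    have hbx : b ≠ x := fun h => hx (h ▸ hb)
    rw [Sym2.mem_iff] at hae hbe
    exact (hae.resolve_right hax).trans (hbe.resolve_right hbx).symm
  have hsum : ∑ e ∈ D, edgeCost σ e = ∑ y ∈ T, c * ((σ y : ℕ) + 1) := by
    conv_lhs => rw [hcover]
    rw [Finset.sum_biUnion hdisj]
    refine Finset.sum_congr rfl fun z hz => ?_
    rw [← hD2 z hz, ← smul_eq_mul]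
    refine Finset.sum_eq_card_nsmul fun e he => ?_
    obtain ⟨he, hze⟩ := Finset.mem_filter.1 he
    obtain ⟨y, hy, x, hx, rfl⟩ := hD1 e he
    have hzx : z ≠ x := fun h => hx (h ▸ hz)
    obtain rfl := (Sym2.mem_iff.1 hze).resolve_right hzx
    have h1 := hσ z hz
    have h2 := hout x hx
    rw [edgeCost_mk]
    omega
  have hre : ∑ y ∈ T, ((σ y : ℕ) + 1) = ∑ i ∈ Finset.range T.card, (i + 1) := by
    rw [← himg, Finset.sum_image]
    exact fun a _ b _ hab => σ.injective (Fin.ext hab)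
  have hgauss : ∀ m : ℕ, 2 * ∑ i ∈ Finset.range m, (i + 1) = m ^ 2 + m := by
    intro m
    induction m with
    | zero => simp
    | succ m ihm => rw [Finset.sum_range_succ, mul_add, ihm]; ring
  rw [hsum, ← Finset.mul_sum, hre, ← hgauss]
  generalize ∑ i ∈ Finset.range T.card, (i + 1) = S
  rw [show 2 * S * c = 2 * (c * S) by ring]
  omega

/-- safeness of Rule 2: vertices are numbered (0-indexed) in non-increasing
order of degree, `1 ≤ t < n`, and `δ = d(v_t) − d(v_{t+1}) > k` (0-indexed: indices `t-1`
and `t`).  `G'` is obtained from `G` by deleting, for each of the first `t` vertices,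
exactly `δ − k` edges joining it to the later vertices, and no other edges.  Then
`(G, w, k)` is a yes-instance iff `(G', w − (t² + t)(δ − k)/2, k)` is a yes-instance. -/
theorem statement9 {V : Type*} [Fintype V] [DecidableEq V] (G G' : SimpleGraph V)
    [DecidableRel G.Adj] [DecidableRel G'.Adj] (w k : ℕ)
    (v : Fin (Fintype.card V) ≃ V)
    (hsorted : ∀ i j : Fin (Fintype.card V), i ≤ j → G.degree (v j) ≤ G.degree (v i))
    (t δ : ℕ) (ht1 : 1 ≤ t) (ht2 : t < Fintype.card V)
    (hδ : G.degree (v ⟨t - 1, Nat.lt_of_le_of_lt (Nat.sub_le t 1) ht2⟩)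
        = G.degree (v ⟨t, ht2⟩) + δ)
    (hδk : k < δ)
    (hsub : G' ≤ G)
    (hD1 : ∀ e ∈ G.edgeFinset \ G'.edgeFinset, ∃ i j : Fin (Fintype.card V),
      (i : ℕ) < t ∧ t ≤ (j : ℕ) ∧ e = s(v i, v j))
    (hD2 : ∀ i : Fin (Fintype.card V), (i : ℕ) < t →
      ((G.edgeFinset \ G'.edgeFinset).filter fun e => v i ∈ e).card = δ - k) :
    YesInstance G w k ↔ YesInstance G' (w - (t ^ 2 + t) * (δ - k) / 2) k := by
  classical
  set T : Finset V := Finset.univ.filter fun y => ((v.symm y : Fin _) : ℕ) < t with hTdef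
  set D := G.edgeFinset \ G'.edgeFinset with hDdef
  have hmemT : ∀ y, y ∈ T ↔ ((v.symm y : Fin _) : ℕ) < t := by simp [hTdef]
  have hTcard : T.card = t := by
    have h : T.image v.symm = Finset.univ.filter fun i => i < ⟨t, ht2⟩ := by
      ext i
      simp only [Finset.mem_image, hmemT, Finset.mem_filter, Finset.mem_univ, true_and,
        Fin.lt_def]
      exact ⟨by rintro ⟨y, hy, rfl⟩; exact hy, fun h => ⟨v i, by simpa using h, by simp⟩⟩
    rw [← Finset.card_image_of_injective T v.symm.injective, h, Finset.filter_gt_eq_Iio,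
      Fin.card_Iio]
  have hD1' : ∀ e ∈ D, ∃ y ∈ T, ∃ x ∉ T, e = s(y, x) := by
    intro e he
    obtain ⟨i, j, hi, hj, rfl⟩ := hD1 e he
    exact ⟨v i, by simpa [hmemT] using hi, v j, by simpa [hmemT] using hj, rfl⟩
  have hD2' : ∀ y ∈ T, (D.filter fun e => y ∈ e).card = δ - k := by
    intro y hy
    have := hD2 (v.symm y) ((hmemT y).1 hy)
    simpa using this
  set d := G.degree (v ⟨t, ht2⟩) with hd
  have hhigh : ∀ y ∈ T, d + δ ≤ G.degree y := by
    intro y hy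
    rw [← hδ]
    have hy' := (hmemT y).1 hy
    have := hsorted (v.symm y) ⟨t - 1, Nat.lt_of_le_of_lt (Nat.sub_le t 1) ht2⟩
      (by rw [Fin.le_def]; simp only; omega)
    rwa [v.apply_symm_apply] at this
  have hlow : ∀ x ∉ T, G.degree x ≤ d := by
    intro x hx
    have hx' := Nat.le_of_not_lt fun h => hx ((hmemT x).2 h)
    have := hsorted ⟨t, ht2⟩ (v.symm x) hx'
    rwa [v.apply_symm_apply] at this
  have hTne : T.Nonempty := by rw [← Finset.card_pos]; omega
  obtain ⟨y₀, hy₀⟩ := hTne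
  -- The endpoint outside `T` of a deleted edge shows that `d` is positive.
  have hdpos : 0 < d := by
    have hc := hD2' y₀ hy₀
    obtain ⟨e, he⟩ : (D.filter fun e => y₀ ∈ e).Nonempty := by
      rw [← Finset.card_pos]; omega
    have heD := (Finset.mem_filter.1 he).1
    obtain ⟨y, hy, x, hx, rfl⟩ := hD1' e heD
    have hadj : G.Adj y x := SimpleGraph.mem_edgeFinset.1 (Finset.mem_sdiff.1 heD).1
    have : 0 < G.degree x := (G.degree_pos_iff_exists_adj x).2 ⟨y, hadj.symm⟩
    exact this.trans_le (hlow x hx)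
  have hE : G'.edgeFinset ⊆ G.edgeFinset := SimpleGraph.edgeFinset_subset_edgeFinset.2 hsub
  have hhigh' : ∀ y ∈ T, d + k ≤ G'.degree y := by
    intro y hy
    have h1 := hhigh y hy
    have h2 : G.degree y ≤ G'.degree y + (δ - k) := by
      rw [← hD2' y hy, ← G.card_incidenceFinset_eq_degree, ← G'.card_incidenceFinset_eq_degree,
        G.incidenceFinset_eq_filter, G'.incidenceFinset_eq_filter]
      refine (Finset.card_le_card ?_).trans (Finset.card_union_le _ _)
      rw [← Finset.filter_union, hDdef, Finset.union_sdiff_of_subset hE]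
    omega
  have hlow' : ∀ x ∉ T, G'.degree x ≤ d := fun x hx =>
    (SimpleGraph.degree_le_of_le hsub).trans (hlow x hx)
  have hcost : ∀ σ : V ≃ Fin (Fintype.card V), (∀ y ∈ T, (σ y : ℕ) < T.card) →
      totalCost G σ = totalCost G' σ + (t ^ 2 + t) * (δ - k) / 2 := by
    intro σ hσ
    have h := sum_deleted T D (δ - k) hD1' hD2' σ hσ
    rw [hTcard] at h
    rw [← h, totalCost, totalCost, hDdef, add_comm, Finset.sum_sdiff hE]
  constructor
  · rintro ⟨σ, hmax, hw⟩
    obtain ⟨τ, hτ, hle, hfront⟩ := exists_front G k T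
      (fun y hy => by have := hhigh y hy; omega)
      (fun y hy x hx => by have := hhigh y hy; have := hlow x hx; omega) _ σ rfl hmax
    refine ⟨τ, fun a b hab => hτ (hsub hab), ?_⟩
    have := hcost τ hfront
    omega
  · rintro ⟨σ, hmax, hw⟩
    obtain ⟨τ, hτ, hle, hfront⟩ := exists_front G' k T
      (fun y hy => by have := hhigh' y hy; omega)
      (fun y hy x hx => by have := hhigh' y hy; have := hlow' x hx; omega) _ σ rfl hmax
    refine ⟨τ, ?_, ?_⟩
    · intro a b hab
      by_cases hab' : G'.Adj a b
      · exact hτ hab'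
      · have he : s(a, b) ∈ D := by
          rw [hDdef, Finset.mem_sdiff, SimpleGraph.mem_edgeFinset, SimpleGraph.mem_edgeFinset]
          exact ⟨hab, hab'⟩
        obtain ⟨y, hy, x, hx, hyx⟩ := hD1' _ he
        have hyk := pos_lt_of_degree G' τ k hτ y (by have := hhigh' y hy; omega)
        rw [← edgeCost_mk, hyx, edgeCost_mk]
        omega
    · have h := hcost τ hfront
      -- `G'` has an edge, so its total cost is positive and the subtraction was not truncated.
      have hpos : 0 < totalCost G' τ := by
        obtain ⟨z, hz⟩ := (G'.degree_pos_iff_exists_adj y₀).1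
          (by have := hhigh' y₀ hy₀; omega)
        have h1 : edgeCost τ s(y₀, z) ≤ totalCost G' τ :=
          Finset.single_le_sum (f := edgeCost τ) (fun _ _ => Nat.zero_le _)
            (SimpleGraph.mem_edgeFinset.2 hz)
        rw [edgeCost_mk] at h1
        omega
      omega
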